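/- Let 𝒳 be a finite set of d1×d2 real matrices whose entries all have absolute value αγ, let X be drawn uniformly at random from 𝒳, let Ω ⊂ [d1]×[d2] be a fixed set of size n, let Z have i.i.d. N(0,σ²) entries independent of X, and let Y = (X_{i,j} + Z_{i,j})_{(i,j)∈Ω}. Then for any measurable estimator X̂ of X computed from Y, the mutual information satisfies I(X; X̂) ≤ (n/2) log(1 + (αγ/σ)²). -/

import Mathlib

open MeasureTheory ProbabilityTheory Matrix
open scoped ENNReal NNReal Classical

noncomputable section

instance matrixMeasurableSpace {d1 d2 : ℕ} : MeasurableSpace (Matrix (Fin d1) (Fin d2) ℝ) :=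
  MeasurableSpace.pi

/-- Kullback–Leibler divergence between two measures (`∞` unless `μ ≪ ν` and the
log-likelihood ratio is `μ`-integrable). -/
def measureKL {α : Type*} [MeasurableSpace α] (μ ν : Measure α) : ℝ≥0∞ :=
  if μ ≪ ν ∧ Integrable (llr μ ν) μ then ENNReal.ofReal (∫ x, llr μ ν x ∂μ) else ⊤

/-- Mutual information of two random variables: the KL divergence of their joint law from
the product of their marginal laws. -/
def mutualInfo {Ω α β : Type*} [MeasurableSpace Ω] [MeasurableSpace α] [MeasurableSpace β]
    (μ : Measure Ω) (U : Ω → α) (V : Ω → β) : ℝ≥0∞ :=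
  measureKL (μ.map fun ω => (U ω, V ω)) ((μ.map U).prod (μ.map V))

/-- The product of measures with densities has the product density. -/
lemma pi_withDensity {ι : Type*} [Fintype ι] {β : ι → Type*} [∀ i, MeasurableSpace (β i)]
    (μ : ∀ i, Measure (β i)) [∀ i, IsProbabilityMeasure (μ i)] (f : ∀ i, β i → ℝ≥0∞)
    (hf : ∀ i, Measurable (f i)) [∀ i, SigmaFinite ((μ i).withDensity (f i))] :
    Measure.pi (fun i => (μ i).withDensity (f i)) =
      (Measure.pi μ).withDensity (fun x => ∏ i, f i (x i)) := by
  refine Measure.pi_eq fun s hs => ?_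
  have hg : ∀ i, Measurable ((s i).indicator (f i)) := fun i => (hf i).indicator (hs i)
  have hind := iIndepFun_pi (μ := μ) (X := fun i => (s i).indicator (f i))
    (fun i => (hg i).aemeasurable)
  have hprod := lintegral_prod_eq_prod_lintegral_of_indepFun (μ := Measure.pi μ) Finset.univ
    (fun i (x : ∀ i, β i) => (s i).indicator (f i) (x i)) hind
    (fun i => (hg i).comp (measurable_pi_apply i))
  rw [withDensity_apply _ (MeasurableSet.univ_pi hs),
    ← lintegral_indicator (MeasurableSet.univ_pi hs)]
  have heq : (fun x : ∀ i, β i => ∏ i, (s i).indicator (f i) (x i)) =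
      (Set.univ.pi s).indicator (fun x => ∏ i, f i (x i)) := by
    funext x
    by_cases hx : x ∈ Set.univ.pi s
    · rw [Set.indicator_of_mem hx]
      exact Finset.prod_congr rfl fun i _ => Set.indicator_of_mem (hx i trivial) _
    · rw [Set.indicator_of_notMem hx]
      obtain ⟨i, hi⟩ : ∃ i, x i ∉ s i := by simpa [Set.mem_pi] using hx
      exact Finset.prod_eq_zero (Finset.mem_univ i) (Set.indicator_of_notMem hi _)
  rw [← heq, hprod]
  refine Finset.prod_congr rfl fun i _ => ?_
  rw [(measurePreserving_eval μ i).lintegral_comp (hg i), lintegral_indicator (hs i),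
    withDensity_apply _ (hs i)]

/-- For probability measures, `measureKL` is the library Kullback–Leibler divergence. -/
lemma measureKL_eq_klDiv {𝓧 : Type*} [MeasurableSpace 𝓧] (μ ν : Measure 𝓧)
    [IsProbabilityMeasure μ] [IsProbabilityMeasure ν] :
    measureKL μ ν = InformationTheory.klDiv μ ν := by
  simp [measureKL, InformationTheory.klDiv_def]

/-- Replacing the first factor of a product reference measure by the first marginal of `ρ`
decreases the divergence of `ρ`. -/
lemma klDiv_fst_prod_le {𝓧 𝓨 : Type*} [MeasurableSpace 𝓧] [MeasurableSpace 𝓨]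
    [StandardBorelSpace 𝓨] [Nonempty 𝓨] (ρ : Measure (𝓧 × 𝓨)) [IsProbabilityMeasure ρ]
    (Q : Measure 𝓧) (P : Measure 𝓨) [IsProbabilityMeasure Q] [IsProbabilityMeasure P] :
    InformationTheory.klDiv ρ (ρ.fst.prod P) ≤ InformationTheory.klDiv ρ (Q.prod P) := by
  have h := InformationTheory.klDiv_compProd_eq_add (μ := ρ.fst) (ν := Q) (κ := ρ.condKernel)
    (η := Kernel.const 𝓧 P)
  rw [ρ.disintegrate, Measure.compProd_const, Measure.compProd_const] at h
  rw [h]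
  exact le_add_self

/-- Replacing the second factor of a product reference measure by the second marginal of `ρ`
decreases the divergence of `ρ`. -/
lemma klDiv_prod_snd_le {𝓧 𝓨 : Type*} [MeasurableSpace 𝓧] [MeasurableSpace 𝓨]
    [StandardBorelSpace 𝓧] [Nonempty 𝓧] (ρ : Measure (𝓧 × 𝓨)) [IsProbabilityMeasure ρ]
    (P : Measure 𝓧) (Q : Measure 𝓨) [IsProbabilityMeasure Q] [IsProbabilityMeasure P] :
    InformationTheory.klDiv ρ (P.prod ρ.snd) ≤ InformationTheory.klDiv ρ (P.prod Q) := by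
  have : IsProbabilityMeasure (ρ.map Prod.swap) :=
    Measure.isProbabilityMeasure_map measurable_swap.aemeasurable
  calc InformationTheory.klDiv ρ (P.prod ρ.snd)
      = InformationTheory.klDiv ((ρ.map Prod.swap).map Prod.swap)
          ((ρ.snd.prod P).map Prod.swap) := by
        rw [Measure.prod_swap, Measure.map_map measurable_swap measurable_swap]
        simp
    _ ≤ InformationTheory.klDiv (ρ.map Prod.swap) (ρ.snd.prod P) :=
        InformationTheory.klDiv_map_le _ _ measurable_swap
    _ ≤ InformationTheory.klDiv (ρ.map Prod.swap) (Q.prod P) := by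
        simpa using klDiv_fst_prod_le (ρ.map Prod.swap) Q P
    _ = InformationTheory.klDiv (ρ.map Prod.swap) ((P.prod Q).map Prod.swap) := by
        rw [Measure.prod_swap]
    _ ≤ InformationTheory.klDiv ρ (P.prod Q) :=
        InformationTheory.klDiv_map_le _ _ measurable_swap

/-- A Gaussian measure has the ratio of the Gaussian densities as density with respect to another
Gaussian measure. -/
lemma gaussianReal_eq_withDensity_gaussianReal (m m' : ℝ) {v w : ℝ≥0} (hv : v ≠ 0) (hw : w ≠ 0) :
    gaussianReal m v = (gaussianReal m' w).withDensity
      (fun y => ENNReal.ofReal (gaussianPDFReal m v y / gaussianPDFReal m' w y)) := by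
  rw [gaussianReal_of_var_ne_zero m hv, gaussianReal_of_var_ne_zero m' hw,
    ← withDensity_mul _ (measurable_gaussianPDF _ _) (by fun_prop)]
  congr 1
  funext y
  have := gaussianPDFReal_pos m' w y hw
  rw [Pi.mul_apply, gaussianPDF, gaussianPDF, ← ENNReal.ofReal_mul this.le,
    mul_div_cancel₀ _ this.ne']

lemma log_gaussianPDFReal_div (m : ℝ) {v w : ℝ≥0} (hv : v ≠ 0) (hw : w ≠ 0) (y : ℝ) :
    Real.log (gaussianPDFReal m v y / gaussianPDFReal 0 w y) =
      1 / 2 * Real.log (w / v) + (y ^ 2 / (2 * w) - (y - m) ^ 2 / (2 * v)) := by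
  have hv' : (0 : ℝ) < v := by positivity
  have hw' : (0 : ℝ) < w := by positivity
  have h2v : (0 : ℝ) < 2 * Real.pi * v := by positivity
  have h2w : (0 : ℝ) < 2 * Real.pi * w := by positivity
  rw [Real.log_div (gaussianPDFReal_pos _ _ _ hv).ne' (gaussianPDFReal_pos _ _ _ hw).ne',
    gaussianPDFReal, gaussianPDFReal, Real.log_mul (by positivity) (by positivity),
    Real.log_mul (by positivity) (by positivity), Real.log_exp, Real.log_exp, Real.log_inv,
    Real.log_inv, Real.log_sqrt h2v.le, Real.log_sqrt h2w.le,
    Real.log_mul (by positivity) hv'.ne', Real.log_mul (by positivity) hw'.ne',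
    Real.log_div hw'.ne' hv'.ne']
  ring

lemma integral_sq_gaussianReal (v : ℝ≥0) : ∫ z, z ^ 2 ∂(gaussianReal 0 v) = v := by
  have h := variance_fun_id_gaussianReal (μ := 0) (v := v)
  rw [variance_of_integral_eq_zero (by fun_prop) integral_id_gaussianReal] at h
  exact h

/-- The density of parallel Gaussian channels with respect to a centered Gaussian product measure
is jointly measurable in input and output. -/
lemma measurable_prod_gaussian_ratio {𝓧 ι : Type*} [MeasurableSpace 𝓧] [Fintype ι]
    (m : 𝓧 → ι → ℝ) (hm : Measurable m) (v : ℝ≥0) (w : ι → ℝ≥0) :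
    Measurable fun q : 𝓧 × (ι → ℝ) => ∏ i, ENNReal.ofReal
      (gaussianPDFReal (m q.1 i) v (q.2 i) / gaussianPDFReal 0 (w i) (q.2 i)) := by
  have h : ∀ i, Measurable fun q : 𝓧 × (ι → ℝ) => gaussianPDFReal (m q.1 i) v (q.2 i) :=
    fun i => measurable_uncurry_gaussianPDFReal.comp
      (f := fun q : 𝓧 × (ι → ℝ) => (m q.1 i, v, q.2 i)) (by fun_prop)
  fun_prop

/-- The joint law of `x` and a signal `m x` observed in Gaussian noise has an explicit density
with respect to the product of the law of `x` with a centered Gaussian product measure. -/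
lemma map_add_gaussian_eq_withDensity {𝓧 ι : Type*} [MeasurableSpace 𝓧] [Fintype ι]
    (P : Measure 𝓧) [IsProbabilityMeasure P] (m : 𝓧 → ι → ℝ) (hm : Measurable m)
    {v : ℝ≥0} (hv : v ≠ 0) {w : ι → ℝ≥0} (hw : ∀ i, w i ≠ 0) :
    (P.prod (Measure.pi fun _ : ι => gaussianReal 0 v)).map (fun p => (p.1, m p.1 + p.2)) =
      (P.prod (Measure.pi fun i => gaussianReal 0 (w i))).withDensity
        (fun q => ∏ i, ENNReal.ofReal
          (gaussianPDFReal (m q.1 i) v (q.2 i) / gaussianPDFReal 0 (w i) (q.2 i))) := by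
  have hT : Measurable fun p : 𝓧 × (ι → ℝ) => (p.1, m p.1 + p.2) := by fun_prop
  have hf := measurable_prod_gaussian_ratio m hm v w
  refine Measure.ext_of_lintegral _ fun φ hφ => ?_
  rw [lintegral_map hφ hT, lintegral_prod (fun p => φ (p.1, m p.1 + p.2)) (hφ.comp hT).aemeasurable,
    lintegral_withDensity_eq_lintegral_mul _ hf hφ, lintegral_prod _ (hf.mul hφ).aemeasurable]
  refine lintegral_congr fun x => ?_
  have hshift : (Measure.pi fun _ : ι => gaussianReal 0 v).map (fun z => m x + z) =
      (Measure.pi fun i => gaussianReal 0 (w i)).withDensity (fun y => ∏ i, ENNReal.ofReal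
          (gaussianPDFReal (m x i) v (y i) / gaussianPDFReal 0 (w i) (y i))) := by
    have hd : ∀ i, (gaussianReal 0 (w i)).withDensity (fun y => ENNReal.ofReal
        (gaussianPDFReal (m x i) v y / gaussianPDFReal 0 (w i) y)) = gaussianReal (m x i) v :=
      fun i => (gaussianReal_eq_withDensity_gaussianReal _ _ hv (hw i)).symm
    have : ∀ i, SigmaFinite ((gaussianReal 0 (w i)).withDensity (fun y => ENNReal.ofReal
        (gaussianPDFReal (m x i) v y / gaussianPDFReal 0 (w i) y))) := by
      intro i
      rw [hd i]
      infer_instance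
    rw [← pi_withDensity (fun i => gaussianReal 0 (w i)) (fun i y => ENNReal.ofReal
        (gaussianPDFReal (m x i) v y / gaussianPDFReal 0 (w i) y)) (fun i => by fun_prop)]
    simp_rw [hd]
    have hmap : ∀ i, (gaussianReal 0 v).map (m x i + ·) = gaussianReal (m x i) v := fun i => by
      rw [gaussianReal_map_const_add, zero_add]
    have : ∀ i, SigmaFinite ((gaussianReal 0 v).map (m x i + ·)) := by
      intro i
      rw [hmap i]
      infer_instance
    have hpi := Measure.pi_map_pi (μ := fun _ : ι => gaussianReal 0 v)
      (f := fun i z => m x i + z) (fun i => by fun_prop)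
    simp_rw [hmap] at hpi
    exact hpi
  have hφx : Measurable fun y => φ (x, y) := hφ.comp measurable_prodMk_left
  have hfx := hf.comp (measurable_prodMk_left (x := x))
  calc ∫⁻ z, φ (x, m x + z) ∂(Measure.pi fun _ : ι => gaussianReal 0 v)
      = ∫⁻ y, φ (x, y) ∂((Measure.pi fun _ : ι => gaussianReal 0 v).map (fun z => m x + z)) :=
        (lintegral_map hφx (by fun_prop)).symm
    _ = _ := by
        rw [hshift]
        exact lintegral_withDensity_eq_lintegral_mul _ hfx hφx

/-- Per-coordinate mean of the log-likelihood ratio between the Gaussian channel output and the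
centered Gaussian of the same second moment. -/
lemma integrable_and_integral_log_gaussian_ratio {𝓧 ι : Type*} [MeasurableSpace 𝓧] [Fintype ι]
    (P : Measure 𝓧) [IsProbabilityMeasure P] (m : 𝓧 → ι → ℝ) (hm : Measurable m)
    {v : ℝ≥0} (hv : v ≠ 0) {w : ι → ℝ≥0} (hw : ∀ i, w i ≠ 0)
    (hmw : ∀ᵐ x ∂P, ∀ i, m x i ^ 2 + v = w i) (i : ι) :
    Integrable (fun p : 𝓧 × (ι → ℝ) => Real.log
        (gaussianPDFReal (m p.1 i) v (m p.1 i + p.2 i) /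
          gaussianPDFReal 0 (w i) (m p.1 i + p.2 i)))
      (P.prod (Measure.pi fun _ : ι => gaussianReal 0 v)) ∧
    ∫ p, Real.log (gaussianPDFReal (m p.1 i) v (m p.1 i + p.2 i) /
        gaussianPDFReal 0 (w i) (m p.1 i + p.2 i))
      ∂(P.prod (Measure.pi fun _ : ι => gaussianReal 0 v)) = 1 / 2 * Real.log (w i / v) := by
  set N := Measure.pi fun _ : ι => gaussianReal 0 v with hN
  have hv' : (v : ℝ) ≠ 0 := by exact_mod_cast hv
  have hw' : (w i : ℝ) ≠ 0 := by exact_mod_cast hw i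
  have hmi : Measurable fun x => m x i := by fun_prop
  have hae : ∀ᵐ p ∂(P.prod N), m p.1 i ^ 2 + v = w i :=
    Measure.quasiMeasurePreserving_fst.ae (hmw.mono fun x hx => hx i)
  have hmint : Integrable (fun x => m x i) P := by
    refine Integrable.of_bound hmi.aestronglyMeasurable (√(w i)) (hmw.mono fun x hx => ?_)
    rw [Real.norm_eq_abs]
    refine Real.abs_le_sqrt ?_
    rw [← hx i]
    exact le_add_of_nonneg_right v.2
  have hz1 : Integrable (fun z : ι → ℝ => z i) N := 
    integrable_eval (i := i) ((memLp_id_gaussianReal 1).integrable le_rfl)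
  have hz2 : Integrable (fun z : ι → ℝ => z i ^ 2) N := by
    have h : Integrable (fun z : ℝ => z ^ 2) (gaussianReal 0 v) :=
      (memLp_id_gaussianReal 2).integrable_sq
    exact integrable_comp_eval (μ := fun _ : ι => gaussianReal 0 v) h
  have e1 : ∫ z, z i ∂N = 0 := by
    rw [hN, integral_comp_eval (μ := fun _ : ι => gaussianReal 0 v) (i := i)
      (f := fun z : ℝ => z) (by fun_prop),
      integral_id_gaussianReal]
  have e2 : ∫ z, z i ^ 2 ∂N = v := by
    rw [hN, integral_comp_eval (μ := fun _ : ι => gaussianReal 0 v) (i := i)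
      (f := fun z : ℝ => z ^ 2) (by fun_prop),
      integral_sq_gaussianReal]
  have hcong : (fun p : 𝓧 × (ι → ℝ) => Real.log
        (gaussianPDFReal (m p.1 i) v (m p.1 i + p.2 i) /
          gaussianPDFReal 0 (w i) (m p.1 i + p.2 i))) =ᵐ[P.prod N]
      fun p => (1 / 2 * Real.log (w i / v) + (w i - v) / (2 * w i)) +
        ((1 / w i) * (m p.1 i * p.2 i) + (1 / (2 * w i) - 1 / (2 * v)) * (1 * p.2 i ^ 2)) := by
    filter_upwards [hae] with p hp
    rw [log_gaussianPDFReal_div _ hv (hw i), ← hp]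
    rw [← hp] at hw'
    field_simp
    ring
  have i1 : Integrable (fun p : 𝓧 × (ι → ℝ) => (1 / (w i : ℝ)) * (m p.1 i * p.2 i)) (P.prod N) :=
    (hmint.mul_prod hz1).const_mul _
  have i2 : Integrable (fun p : 𝓧 × (ι → ℝ) =>
      (1 / (2 * (w i : ℝ)) - 1 / (2 * v)) * (1 * p.2 i ^ 2)) (P.prod N) :=
    ((integrable_const (1 : ℝ)).mul_prod hz2).const_mul _
  have i12 : Integrable (fun p : 𝓧 × (ι → ℝ) => (1 / (w i : ℝ)) * (m p.1 i * p.2 i) +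
      (1 / (2 * (w i : ℝ)) - 1 / (2 * v)) * (1 * p.2 i ^ 2)) (P.prod N) := i1.add i2
  refine ⟨((integrable_const _).add i12).congr hcong.symm, ?_⟩
  rw [integral_congr_ae hcong, integral_add (integrable_const _) i12,
    integral_add i1 i2, integral_const_mul, integral_const_mul,
    integral_prod_mul (fun x => m x i) (fun z : ι → ℝ => z i),
    integral_prod_mul (fun _ : 𝓧 => (1 : ℝ)) (fun z : ι → ℝ => z i ^ 2), e1, e2]
  simp
  field_simp
  ring

/-- Divergence of the joint law of input and output of parallel Gaussian channels from the product
of the input law and the centered Gaussian measure with matching second moments. -/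
lemma klDiv_map_add_gaussian {𝓧 ι : Type*} [MeasurableSpace 𝓧] [Fintype ι]
    (P : Measure 𝓧) [IsProbabilityMeasure P] (m : 𝓧 → ι → ℝ) (hm : Measurable m)
    {v : ℝ≥0} (hv : v ≠ 0) {w : ι → ℝ≥0} (hw : ∀ i, w i ≠ 0)
    (hmw : ∀ᵐ x ∂P, ∀ i, m x i ^ 2 + v = w i) :
    InformationTheory.klDiv
        ((P.prod (Measure.pi fun _ : ι => gaussianReal 0 v)).map (fun p => (p.1, m p.1 + p.2)))
        (P.prod (Measure.pi fun i => gaussianReal 0 (w i))) =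
      ENNReal.ofReal (∑ i, 1 / 2 * Real.log (w i / v)) := by
  have hT : Measurable fun p : 𝓧 × (ι → ℝ) => (p.1, m p.1 + p.2) := by fun_prop
  have hf := measurable_prod_gaussian_ratio m hm v w
  have hdens := map_add_gaussian_eq_withDensity P m hm hv hw
  set N := Measure.pi fun _ : ι => gaussianReal 0 v
  set ρ := (P.prod N).map (fun p => (p.1, m p.1 + p.2)) with hρ
  set ν := P.prod (Measure.pi fun i => gaussianReal 0 (w i))
  have : IsProbabilityMeasure ρ := Measure.isProbabilityMeasure_map hT.aemeasurable
  have hac : ρ ≪ ν := hdens ▸ withDensity_absolutelyContinuous _ _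
  have hllr : llr ρ ν =ᵐ[ρ] fun q => ∑ i, Real.log
      (gaussianPDFReal (m q.1 i) v (q.2 i) / gaussianPDFReal 0 (w i) (q.2 i)) := by
    have h := Measure.rnDeriv_withDensity ν hf
    rw [← hdens] at h
    filter_upwards [hac.ae_le h] with q hq
    have hpos : ∀ i, 0 < gaussianPDFReal (m q.1 i) v (q.2 i) / gaussianPDFReal 0 (w i) (q.2 i) :=
      fun i => div_pos (gaussianPDFReal_pos _ _ _ hv) (gaussianPDFReal_pos _ _ _ (hw i))
    rw [llr_def]
    simp only [hq, ENNReal.toReal_prod, ENNReal.toReal_ofReal (hpos _).le]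
    exact Real.log_prod fun i _ => (hpos i).ne'
  have hterm := integrable_and_integral_log_gaussian_ratio P m hm hv hw hmw
  have hmeas : AEStronglyMeasurable (llr ρ ν) ρ :=
    (stronglyMeasurable_llr ρ ν).aestronglyMeasurable
  have hcomp : (fun p => llr ρ ν (p.1, m p.1 + p.2)) =ᵐ[P.prod N] fun p => ∑ i, Real.log
      (gaussianPDFReal (m p.1 i) v (m p.1 i + p.2 i) /
        gaussianPDFReal 0 (w i) (m p.1 i + p.2 i)) := by
    filter_upwards [ae_of_ae_map hT.aemeasurable hllr] with p hp
    exact hp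
  have hint : Integrable (llr ρ ν) ρ := by
    rw [hρ, integrable_map_measure hmeas hT.aemeasurable]
    exact (integrable_finsetSum _ fun i _ => (hterm i).1).congr hcomp.symm
  have hval : ∫ q, llr ρ ν q ∂ρ = ∑ i, 1 / 2 * Real.log (w i / v) := by
    rw [hρ, integral_map hT.aemeasurable hmeas, integral_congr_ae hcomp,
      integral_finsetSum _ fun i _ => (hterm i).1]
    exact Finset.sum_congr rfl fun i _ => (hterm i).2
  rw [InformationTheory.klDiv_of_ac_of_integrable hac hint, hval]
  simp

/-- **Lemma (mutual information bound).**  If `X` is uniform on a finite set `𝒳` of matrices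
with all entries of absolute value `αγ`, `Z` has i.i.d. `N(0,σ²)` entries independent of `X`,
and `X̂` is any measurable estimator computed from `(X_{ij} + Z_{ij})_{(i,j) ∈ Ω}` with
`|Ω| = n`, then `I(X; X̂) ≤ (n/2) log(1 + (αγ/σ)²)`. -/
theorem mutual_information_bound
    (d1 d2 n : ℕ) (α γ σ : ℝ) (hσ : 0 < σ)
    (𝒳 : Finset (Matrix (Fin d1) (Fin d2) ℝ)) (hne : 𝒳.Nonempty)
    (hentries : ∀ X ∈ 𝒳, ∀ i j, |X i j| = α * γ)
    (Ω : Finset (Fin d1 × Fin d2)) (hΩ : Ω.card = n)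
    (est : ((Fin d1 × Fin d2) → ℝ) → Matrix (Fin d1) (Fin d2) ℝ)
    (hmeas : Measurable est)
    (hdep : ∀ y y' : (Fin d1 × Fin d2) → ℝ, (∀ ij ∈ Ω, y ij = y' ij) → est y = est y') :
    mutualInfo
        (((PMF.uniformOfFinset 𝒳 hne).toMeasure).prod
          (Measure.pi fun _ : Fin d1 × Fin d2 => gaussianReal 0 (σ ^ 2).toNNReal))
        (fun ω => ω.1)
        (fun ω => est (fun ij => ω.1 ij.1 ij.2 + ω.2 ij)) ≤
      ENNReal.ofReal ((n / 2) * Real.log (1 + (α * γ / σ) ^ 2)) := by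
  have : StandardBorelSpace (Matrix (Fin d1) (Fin d2) ℝ) :=
    inferInstanceAs (StandardBorelSpace (Fin d1 → Fin d2 → ℝ))
  set P := (PMF.uniformOfFinset 𝒳 hne).toMeasure
  set v : ℝ≥0 := (σ ^ 2).toNNReal
  have hvσ : (v : ℝ) = σ ^ 2 := Real.coe_toNNReal _ (sq_nonneg σ)
  have hv : v ≠ 0 := (Real.toNNReal_pos.2 (pow_pos hσ 2)).ne'
  set N := Measure.pi fun _ : Fin d1 × Fin d2 => gaussianReal 0 v
  have : Nonempty (Matrix (Fin d1) (Fin d2) ℝ) := ⟨hne.choose⟩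
  let m : Matrix (Fin d1) (Fin d2) ℝ → Fin d1 × Fin d2 → ℝ :=
    fun X ij => if ij ∈ Ω then X ij.1 ij.2 else 0
  have hentry : ∀ i j, Measurable fun X : Matrix (Fin d1) (Fin d2) ℝ => X i j := fun i j =>
    (measurable_pi_apply (X := fun _ : Fin d2 => ℝ) j).comp
      (measurable_pi_apply (X := fun _ : Fin d1 => Fin d2 → ℝ) i)
  have hm : Measurable m := by
    refine measurable_pi_lambda _ fun ij => ?_
    by_cases h : ij ∈ Ω
    · simpa [m, h] using hentry ij.1 ij.2
    · simp [m, h]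
  let w : Fin d1 × Fin d2 → ℝ≥0 :=
    fun ij => if ij ∈ Ω then ((α * γ) ^ 2).toNNReal + v else v
  have hw : ∀ ij, w ij ≠ 0 := fun ij => by
    by_cases h : ij ∈ Ω <;> simp [w, h, hv]
  have hP : ∀ᵐ X ∂P, X ∈ 𝒳 := by
    refine (PMF.toMeasure_apply_eq_zero_iff _ (𝒳.finite_toSet.measurableSet.compl)).2 ?_
    rw [PMF.support_uniformOfFinset]
    exact disjoint_compl_right
  have hmw : ∀ᵐ X ∂P, ∀ ij, m X ij ^ 2 + v = w ij := by
    filter_upwards [hP] with X hX ij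
    by_cases h : ij ∈ Ω
    · simp [m, w, h, ← sq_abs (X ij.1 ij.2), hentries X hX, Real.coe_toNNReal _ (sq_nonneg (α * γ))]
    · simp [m, w, h]
  have hT : Measurable fun p : Matrix (Fin d1) (Fin d2) ℝ × (Fin d1 × Fin d2 → ℝ) =>
      (p.1, m p.1 + p.2) := by fun_prop
  have hest : (fun ω : Matrix (Fin d1) (Fin d2) ℝ × (Fin d1 × Fin d2 → ℝ) =>
      est (fun ij => ω.1 ij.1 ij.2 + ω.2 ij)) = fun ω => est (m ω.1 + ω.2) := by
    funext ω
    exact hdep _ _ fun ij hij => by simp [m, hij]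
  have hV : Measurable fun ω : Matrix (Fin d1) (Fin d2) ℝ × (Fin d1 × Fin d2 → ℝ) =>
      est (m ω.1 + ω.2) := by fun_prop
  have hE : Measurable fun q : Matrix (Fin d1) (Fin d2) ℝ × (Fin d1 × Fin d2 → ℝ) =>
      (q.1, est q.2) := by fun_prop
  set Q := Measure.pi fun ij => gaussianReal 0 (w ij)
  have : IsProbabilityMeasure (Q.map est) := Measure.isProbabilityMeasure_map hmeas.aemeasurable
  have : IsProbabilityMeasure ((P.prod N).map fun ω => (ω.1, est (m ω.1 + ω.2))) :=
    Measure.isProbabilityMeasure_map (by fun_prop)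
  have : IsProbabilityMeasure ((P.prod N).map fun ω => est (m ω.1 + ω.2)) :=
    Measure.isProbabilityMeasure_map hV.aemeasurable
  have hfst : (P.prod N).map (fun ω => ω.1) = P := by simp
  have hsnd : ((P.prod N).map fun ω => (ω.1, est (m ω.1 + ω.2))).snd =
      (P.prod N).map fun ω => est (m ω.1 + ω.2) :=
    Measure.snd_map_prodMk measurable_fst
  have hsum : ∑ ij, 1 / 2 * Real.log (w ij / v) =
      (n / 2) * Real.log (1 + (α * γ / σ) ^ 2) := by
    have hterm : ∀ ij, 1 / 2 * Real.log (w ij / v) =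
        if ij ∈ Ω then 1 / 2 * Real.log (1 + (α * γ / σ) ^ 2) else 0 := by
      intro ij
      have hv' : (v : ℝ) ≠ 0 := by exact_mod_cast hv
      by_cases h : ij ∈ Ω
      · simp only [w, h, if_true, NNReal.coe_add, Real.coe_toNNReal _ (sq_nonneg (α * γ))]
        rw [add_div, div_self hv', hvσ, div_pow, add_comm]
      · simp [w, h, div_self hv']
    simp_rw [hterm]
    rw [Finset.sum_ite_mem, Finset.univ_inter, Finset.sum_const, hΩ, nsmul_eq_mul]
    ring
  rw [hest, mutualInfo, hfst, measureKL_eq_klDiv, ← hsnd]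
  calc InformationTheory.klDiv ((P.prod N).map fun ω => (ω.1, est (m ω.1 + ω.2)))
        (P.prod ((P.prod N).map fun ω => (ω.1, est (m ω.1 + ω.2))).snd)
      ≤ InformationTheory.klDiv ((P.prod N).map fun ω => (ω.1, est (m ω.1 + ω.2)))
        (P.prod (Q.map est)) := klDiv_prod_snd_le _ _ _
    _ = InformationTheory.klDiv
        (((P.prod N).map fun p => (p.1, m p.1 + p.2)).map fun q => (q.1, est q.2))
        ((P.prod Q).map fun q => (q.1, est q.2)) := by
        rw [Measure.map_map hE hT]
        congr 1
        have := Measure.map_prod_map P Q measurable_id hmeas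
        rw [Measure.map_id] at this
        exact this
    _ ≤ InformationTheory.klDiv ((P.prod N).map fun p => (p.1, m p.1 + p.2)) (P.prod Q) := by
        have : IsProbabilityMeasure ((P.prod N).map fun p => (p.1, m p.1 + p.2)) :=
          Measure.isProbabilityMeasure_map hT.aemeasurable
        exact InformationTheory.klDiv_map_le _ _ hE
    _ = ENNReal.ofReal ((n / 2) * Real.log (1 + (α * γ / σ) ^ 2)) := by
        rw [klDiv_map_add_gaussian P m hm hv hw hmw, hsum]

end
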